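/- Let R be a commutative ring containing ℚ, L a set of letters, and ⋄: (R·L) × (R·L) → R⟨L⟩ a commutative and decomposable R-bilinear map, with generalized quasi-shuffle product ⧢̂. Then the following two statements are equivalent: (i) for all letters α,β ∈ L, all x,y ∈ R⟨L⟩, and every integer k with 1 ≤ k < l(α⋄β), one has R^k(α⋄β)x ⧢̂ y = F(R^k(α⋄β)x)·(R^{k+1}(α⋄β)x ⧢̂ y); (ii) for all letters α',β' ∈ L with l(α'⋄β') ≥ 2, every letter γ ∈ L, and every integer k' with 1 ≤ k' < l(α'⋄β'), one has γ ⋄ F(R^{k'}(α'⋄β')) = −γ·F(R^{k'}(α'⋄β')). -/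

import Mathlib

/-! Both conditions speak about the letters `c` in position `k ≥ 1` of some word `α ⋄ β`, followed
by the word `u = R^{k+1}(α ⋄ β)`; condition (i) says `c u x ⧢̂ y = c (u x ⧢̂ y)`.

* (ii) ⟹ (i): if `γ ⋄ c = -γ c` for every letter `γ`, an induction on the word `y` gives
  `c u ⧢̂ y = c (u ⧢̂ y)` for all words `u`, since for `y = b v` the last two terms of the recursion,
  `b (c u ⧢̂ v) = b c (u ⧢̂ v)` and `(c ⋄ b) (u ⧢̂ v) = -b c (u ⧢̂ v)`, cancel
  (`sh_cons_of_anti`). Bilinearity extends this to all `x` and `y`.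
* (i) ⟹ (ii): for `x = 𝟏` and `y = γ` the recursion turns (i) into `(γ c + c ⋄ γ) u = 0`, and
  multiplication by a word on the right is injective (`eq_zero_of_mul_ofW`). -/

/- STATEMENT 8 (Lemma on the associativity criterion): for a commutative and
decomposable R-bilinear map ⋄ : (R·L) × (R·L) → R⟨L⟩, conditions (i) and (ii)
are equivalent. Here ⋄ is modelled by its values on letters, each value being a
scalar multiple of a single (monic) word: α⋄β = coef α β • wrd α β; then
F(α⋄β) = coef α β • (first letter of wrd α β), R(α⋄β) = tail of wrd α β
(a monic word, the coefficient being dropped), and l(α⋄β) = length of wrd α β. -/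

noncomputable section

def ofW (R : Type*) [CommRing R] {L : Type*} (w : List L) :
    MonoidAlgebra R (FreeMonoid L) :=
  MonoidAlgebra.of R (FreeMonoid L) (FreeMonoid.ofList w)

theorem ofW_nil (R : Type*) [CommRing R] {L : Type*} : ofW R ([] : List L) = 1 :=
  map_one (MonoidAlgebra.of R (FreeMonoid L))

theorem ofW_append (R : Type*) [CommRing R] {L : Type*} (u v : List L) :
    ofW R (u ++ v) = ofW R u * ofW R v :=
  map_mul (MonoidAlgebra.of R (FreeMonoid L)) (FreeMonoid.ofList u) (FreeMonoid.ofList v)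

theorem ofW_cons (R : Type*) [CommRing R] {L : Type*} (a : L) (v : List L) :
    ofW R (a :: v) = ofW R [a] * ofW R v :=
  ofW_append R [a] v

theorem eq_zero_of_mul_ofW (R : Type*) [CommRing R] {L : Type*}
    (p : MonoidAlgebra R (FreeMonoid L)) (u : List L) (h : p * ofW R u = 0) : p = 0 := by
  ext z
  have h1 := MonoidAlgebra.coeff_mul_single_eq_coeff_mul (x := p) (r := (1 : R))
    (m := FreeMonoid.ofList u) (m₁ := z * FreeMonoid.ofList u) (m₂ := z)
    (fun a _ => mul_left_inj _)
  have h2 : p * MonoidAlgebra.single (FreeMonoid.ofList u) (1 : R) = 0 := h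
  rw [h2] at h1
  simpa using h1.symm

/-- Words span `R⟨L⟩`. -/
theorem word_induction (R : Type*) [CommRing R] {L : Type*}
    {P : MonoidAlgebra R (FreeMonoid L) → Prop} (x : MonoidAlgebra R (FreeMonoid L))
    (hw : ∀ w : List L, P (ofW R w)) (hadd : ∀ f g, P f → P g → P (f + g))
    (hsmul : ∀ (r : R) f, P f → P (r • f)) : P x :=
  MonoidAlgebra.induction_on x (fun w => hw w.toList) hadd hsmul

/-- A letter `c` with `b ⋄ c = c ⋄ b = -b c` for every letter `b` can be pulled out of the left
factor of a quasi-shuffle product. -/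
theorem sh_cons_of_anti (R L : Type*) [CommRing R]
    (coef : L → L → R) (wrd : L → L → List L)
    (sh : MonoidAlgebra R (FreeMonoid L) →ₗ[R]
        MonoidAlgebra R (FreeMonoid L) →ₗ[R] MonoidAlgebra R (FreeMonoid L))
    (hsh_one' : ∀ x, sh x 1 = x)
    (hsh : ∀ (a b : L) (w v : List L),
      sh (ofW R (a :: w)) (ofW R (b :: v)) =
        ofW R [a] * sh (ofW R w) (ofW R (b :: v))
        + ofW R [b] * sh (ofW R (a :: w)) (ofW R v)
        + (coef a b • ofW R (wrd a b)) * sh (ofW R w) (ofW R v))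
    (c : L) (hc : ∀ b, coef c b • ofW R (wrd c b) = -(ofW R [b] * ofW R [c]))
    (x y : MonoidAlgebra R (FreeMonoid L)) :
    sh (ofW R [c] * x) y = ofW R [c] * sh x y := by
  induction x using word_induction with
  | hadd f g hf hg => simp only [mul_add, map_add, LinearMap.add_apply, hf, hg]
  | hsmul r f hf => simp only [mul_smul_comm, map_smul, LinearMap.smul_apply, hf]
  | hw u =>
    induction y using word_induction with
    | hadd f g hf hg => simp only [mul_add, map_add, hf, hg]
    | hsmul r f hf => simp only [mul_smul_comm, map_smul, hf]
    | hw v =>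
      rw [← ofW_cons]
      induction v with
      | nil => rw [ofW_nil, hsh_one', hsh_one', ofW_cons]
      | cons b v ih => rw [hsh, ih, hc]; noncomm_ring

theorem associativity_criterion_equiv
    (R L : Type*) [CommRing R] [Algebra ℚ R]
    -- ⋄ : α⋄β = coef α β • wrd α β
    (coef : L → L → R) (wrd : L → L → List L)
    -- ⋄ is commutative
    (hcomm : ∀ a b : L,
      coef a b • ofW R (wrd a b) = coef b a • ofW R (wrd b a))
    -- ⋄ is decomposable: there is a single word t such that R(α⋄β) = t whenever
    -- R(α⋄β) ∉ R·L (i.e. whenever the tail of wrd α β is not a single letter)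
    (hdec : ∃ t : List L, ∀ a b : L,
      (wrd a b).tail.length ≠ 1 → (wrd a b).tail = t)
    -- the generalized quasi-shuffle product ⧢̂ associated to ⋄
    (sh : MonoidAlgebra R (FreeMonoid L) →ₗ[R]
        MonoidAlgebra R (FreeMonoid L) →ₗ[R] MonoidAlgebra R (FreeMonoid L))
    (hsh_one : ∀ x, sh 1 x = x) (hsh_one' : ∀ x, sh x 1 = x)
    (hsh : ∀ (a b : L) (w v : List L),
      sh (ofW R (a :: w)) (ofW R (b :: v)) =
        ofW R [a] * sh (ofW R w) (ofW R (b :: v))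
        + ofW R [b] * sh (ofW R (a :: w)) (ofW R v)
        + (coef a b • ofW R (wrd a b)) * sh (ofW R w) (ofW R v)) :
    -- conclusion: (i) ⟺ (ii)
    -- (i)  for all letters α, β, all x, y ∈ R⟨L⟩ and all 1 ≤ k < l(α⋄β):
    --      R^k(α⋄β)x ⧢̂ y = F(R^k(α⋄β)x)·(R^{k+1}(α⋄β)x ⧢̂ y)
    ((∀ (α β : L) (x y : MonoidAlgebra R (FreeMonoid L)) (k : ℕ)
        (hk : 1 ≤ k) (hk' : k < (wrd α β).length),
        sh (ofW R ((wrd α β).drop k) * x) y =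
          ofW R [(wrd α β).get ⟨k, hk'⟩]
            * sh (ofW R ((wrd α β).drop (k + 1)) * x) y)
    ↔
    -- (ii) for all letters α', β' with l(α'⋄β') ≥ 2, every letter γ and all
    --      1 ≤ k' < l(α'⋄β'): γ ⋄ F(R^{k'}(α'⋄β')) = −γ·F(R^{k'}(α'⋄β'))
      (∀ (α' β' : L), 2 ≤ (wrd α' β').length → ∀ (γ : L) (k' : ℕ)
        (hk : 1 ≤ k') (hk' : k' < (wrd α' β').length),
        coef γ ((wrd α' β').get ⟨k', hk'⟩)
            • ofW R (wrd γ ((wrd α' β').get ⟨k', hk'⟩)) =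
          -(ofW R [γ] * ofW R [(wrd α' β').get ⟨k', hk'⟩]))) := by
  constructor
  · intro h α β _ γ k hk hk'
    have h1 := h α β 1 (ofW R [γ]) k hk hk'
    rw [mul_one, mul_one, List.drop_eq_getElem_cons hk', hsh, ofW_nil, hsh_one', hsh_one',
      ofW_cons R _ (List.drop _ _), List.get_eq_getElem, add_assoc, add_eq_left, ← mul_assoc, ← add_mul] at h1
    rw [hcomm]
    exact eq_neg_of_add_eq_zero_right (eq_zero_of_mul_ofW R _ _ h1)
  · intro h α β x y k hk hk'
    rw [List.drop_eq_getElem_cons hk', ofW_cons, mul_assoc]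
    refine sh_cons_of_anti R L coef wrd sh hsh_one' hsh _ (fun b => ?_) _ _
    rw [hcomm]
    exact h α β (by omega) b k hk hk'
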